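/- Fix finite nonempty sets SP₀, SQ₀, SP₁, SQ₁ ⊂ ℕ with 0 ∈ SP₀ ∪ SQ₀, 0 ∈ SP₁ ∪ SQ₁, gcd of the nonzero elements of SP₀ ∪ SQ₀ ∪ SP₁ ∪ SQ₁ equal to 1, and set a₀n = max(SP₀ ∪ SQ₀) ≥ 1 and a₁m = max(SP₁ ∪ SQ₁) ≥ 1. Then for generic coefficients the following holds for every irreducible φ ∈ ℂ[x,y] with φ(P₀/Q₀, P₁/Q₁) = 0 in ℂ(t): (a) the degree of φ in x equals a₁m; (b) the largest j such that (a₁m, j) ∈ supp(φ) equals (max SQ₀ − min SQ₀) + [0 ∈ SQ₁]·(min SQ₀) + [a₁m ∈ SQ₁]·(a₀n − max SQ₀). -/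

import Mathlib

open Polynomial

/-- The univariate polynomial with support `S` and coefficient vector `c`. -/
noncomputable def polyOfCoeffs (S : Finset ℕ) (c : {s // s ∈ S} → ℂ) : Polynomial ℂ :=
  ∑ s ∈ S.attach, Polynomial.C (c s) * Polynomial.X ^ (s : ℕ)

/-- The image of that polynomial in the field of rational functions `ℂ(t)`. -/
noncomputable def ratFuncOf (S : Finset ℕ) (c : {s // s ∈ S} → ℂ) : RatFunc ℂ :=
  algebraMap (Polynomial ℂ) (RatFunc ℂ) (polyOfCoeffs S c)

/-- The Newton polygon of a bivariate polynomial: the convex hull in `ℝ²` of its support. -/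
noncomputable def newtonPolygon (φ : MvPolynomial (Fin 2) ℂ) : Set (ℝ × ℝ) :=
  convexHull ℝ ((fun d : Fin 2 →₀ ℕ => ((d 0 : ℝ), (d 1 : ℝ))) '' ↑φ.support)

/-- `φ(P₀/Q₀, P₁/Q₁) = 0` in `ℂ(t)`, where `P₀, Q₀, P₁, Q₁` have supports
`SS 0, SS 1, SS 2, SS 3` and coefficient vector `c`. -/
def vanishesDiff (SS : Fin 4 → Finset ℕ)
    (c : (Σ i : Fin 4, {s // s ∈ SS i}) → ℂ) (φ : MvPolynomial (Fin 2) ℂ) : Prop :=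
  MvPolynomial.aeval
    ![ratFuncOf (SS 0) (fun s => c ⟨0, s⟩) / ratFuncOf (SS 1) (fun s => c ⟨1, s⟩),
      ratFuncOf (SS 2) (fun s => c ⟨2, s⟩) / ratFuncOf (SS 3) (fun s => c ⟨3, s⟩)] φ = 0

/-!
The resultant `R(x, y) = Res_t(P₁ - yQ₁, P₀ - xQ₀)` vanishes on the curve, so by Gauss's lemma `φ`
divides it. In terms of the roots `τ` of `P₁ - yQ₁`, counted on the projective line, `R(·, y)` is
a constant times the product of the `P₀(τ) - xQ₀(τ)`: it has degree at most `a₁m` in `x` and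
vanishes identically for no `y`, so `R` is primitive over `ℂ[y]`. Generically the parametrization
separates the `a₁m` points of the fiber `y = 1`. Then `φ(·, 1)` has `a₁m` distinct roots, so `φ`
has degree `a₁m` in `x` and agrees with `R` up to a constant.

By the symmetry of the resultant, the coefficient of `x ^ a₁m` in `R` is up to sign
`Res_t(Q₀, P₁ - yQ₁)`, whose degree in `y` is the number of roots of `Q₀` on the projective line
that are not roots of `Q₁`. Generically `Q₀` and `Q₁` share no root other than `0` and `∞`, and
these two give the two bracketed terms.

To find one coefficient vector with a separated fiber, take `h = ∑ t ^ s` over the supports of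
`P₁` and `Q₁` and a fiber polynomial `h - a`. For all but finitely many `a` it has distinct nonzero
roots, and two roots `σ`, `ζσ` with `ζ ^ a₀n = 1` occur only if `h(ζt) = h(t)`. If `τ`, `σ` are
separated by no choice of `P₀ / Q₀`, then `τ ^ s = σ ^ s` for all exponents `s` of `P₀` and `Q₀`,
hence for all exponents, and `τ = σ` by the condition on the gcd.
-/

section Genericity

open Filter

/-- The filter of generic points of the affine space `σ → K`: a property holds eventually along it
if it holds wherever some fixed nonzero polynomial does not vanish. -/
def zariskiGeneric (σ K : Type*) [CommRing K] [IsDomain K] : Filter (σ → K) where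
  sets := {s | ∃ G : MvPolynomial σ K, G ≠ 0 ∧ ∀ c, MvPolynomial.eval c G ≠ 0 → c ∈ s}
  univ_sets := ⟨1, one_ne_zero, fun _ _ => trivial⟩
  sets_of_superset := fun ⟨G, hG, h⟩ hst => ⟨G, hG, fun c hc => hst (h c hc)⟩
  inter_sets := by
    rintro s t ⟨G, hG, hs⟩ ⟨H, hH, ht⟩
    refine ⟨G * H, mul_ne_zero hG hH, fun c hc => ?_⟩
    rw [map_mul] at hc
    exact ⟨hs c (left_ne_zero_of_mul hc), ht c (right_ne_zero_of_mul hc)⟩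

variable {σ K : Type*}

instance zariskiGeneric_neBot [CommRing K] [IsDomain K] [Infinite K] :
    (zariskiGeneric σ K).NeBot := by
  refine ⟨fun h => ?_⟩
  obtain ⟨G, hG, hGempty⟩ : ∅ ∈ zariskiGeneric σ K := h ▸ mem_bot
  exact hG (MvPolynomial.funext fun c => by simpa using mt (hGempty c) (Set.notMem_empty c))

lemma eventually_zariskiGeneric_eval_ne_zero [CommRing K] [IsDomain K]
    (G : MvPolynomial σ K) {c₀ : σ → K} (h : MvPolynomial.eval c₀ G ≠ 0) :
    ∀ᶠ c in zariskiGeneric σ K, MvPolynomial.eval c G ≠ 0 :=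
  ⟨G, fun hG => h (by simp [hG]), fun _ => id⟩

lemma eventually_zariskiGeneric_forall_ne_zero [CommRing K] [IsDomain K] [Finite σ] :
    ∀ᶠ c in zariskiGeneric σ K, ∀ i, c i ≠ 0 :=
  eventually_all.2 fun i => by
    simpa using eventually_zariskiGeneric_eval_ne_zero (K := K) (c₀ := 1) (.X i) (by simp)

lemma map_leadingCoeff_ne_zero {R S : Type*} [Semiring R] [Semiring S] {g : R →+* S} {f : R[X]}
    (hdeg : (f.map g).natDegree = f.natDegree) (hf : f.map g ≠ 0) : g f.leadingCoeff ≠ 0 := by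
  rw [leadingCoeff, ← coeff_map, ← hdeg]
  exact leadingCoeff_ne_zero.2 hf

lemma eventually_zariskiGeneric_natDegree_map [CommRing K] [IsDomain K]
    (f : (MvPolynomial σ K)[X]) {c₀ : σ → K} (h : MvPolynomial.eval c₀ f.leadingCoeff ≠ 0) :
    ∀ᶠ c in zariskiGeneric σ K, (f.map (MvPolynomial.eval c)).natDegree = f.natDegree :=
  (eventually_zariskiGeneric_eval_ne_zero _ h).mono fun _ =>
    natDegree_map_of_leadingCoeff_ne_zero _

lemma eventually_zariskiGeneric_isCoprime_map [Field K] (A B : (MvPolynomial σ K)[X])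
    {c₀ : σ → K} (hA : MvPolynomial.eval c₀ A.leadingCoeff ≠ 0)
    (hAB : IsCoprime (A.map (MvPolynomial.eval c₀)) (B.map (MvPolynomial.eval c₀))) :
    ∀ᶠ c in zariskiGeneric σ K, MvPolynomial.eval c A.leadingCoeff ≠ 0 ∧
      IsCoprime (A.map (MvPolynomial.eval c)) (B.map (MvPolynomial.eval c)) := by
  have resultant_eval (c : σ → K) (hc : MvPolynomial.eval c A.leadingCoeff ≠ 0) :
      ∃ k : ℕ, MvPolynomial.eval c (A.resultant B) =
        (MvPolynomial.eval c A.leadingCoeff) ^ k *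
          (A.map (MvPolynomial.eval c)).resultant (B.map (MvPolynomial.eval c)) := by
    obtain ⟨k, hk⟩ := Nat.exists_eq_add_of_le (natDegree_map_le (f := MvPolynomial.eval c) (p := B))
    refine ⟨k, ?_⟩
    rw [← resultant_map_map, hk, resultant_add_right_deg _ _ _ _ _ le_rfl, coeff_map,
      natDegree_map_of_leadingCoeff_ne_zero _ hc, leadingCoeff]
  have hG : MvPolynomial.eval c₀ (A.leadingCoeff * A.resultant B) ≠ 0 := by
    obtain ⟨k, hk⟩ := resultant_eval c₀ hA
    rw [map_mul, hk]
    exact mul_ne_zero hA (mul_ne_zero (pow_ne_zero _ hA) (resultant_ne_zero _ _ hAB))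
  filter_upwards [eventually_zariskiGeneric_eval_ne_zero _ hG] with c hc
  rw [map_mul] at hc
  have hAc := left_ne_zero_of_mul hc
  obtain ⟨k, hk⟩ := resultant_eval c hAc
  refine ⟨hAc, by_contra fun hcop => right_ne_zero_of_mul hc ?_⟩
  have hmap : A.map (MvPolynomial.eval c) ≠ 0 := fun h0 => hAc <| by
    rw [leadingCoeff, ← coeff_map, h0, coeff_zero]
  rw [hk, resultant_eq_zero_iff.2 ⟨.inl hmap, hcop⟩, mul_zero]

lemma eventually_zariskiGeneric_separable_map [Field K] (A : (MvPolynomial σ K)[X])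
    {c₀ : σ → K} (hA : MvPolynomial.eval c₀ A.leadingCoeff ≠ 0)
    (hsep : (A.map (MvPolynomial.eval c₀)).Separable) :
    ∀ᶠ c in zariskiGeneric σ K,
      (A.map (MvPolynomial.eval c)).natDegree = A.natDegree ∧
        (A.map (MvPolynomial.eval c)).Separable := by
  rw [Separable, derivative_map] at hsep
  filter_upwards [eventually_zariskiGeneric_isCoprime_map A (derivative A) hA hsep]
    with c ⟨hAc, hcop⟩
  exact ⟨natDegree_map_of_leadingCoeff_ne_zero _ hAc, by rwa [Separable, derivative_map]⟩

end Genericity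

section LinearForms

variable {B : Type*} [CommRing B]

lemma C_sub_X_mul_C_ne_zero {s : B × B} (hs : s ≠ 0) : C s.1 - X * C s.2 ≠ 0 := fun h0 => by
  have hcoeff (k : ℕ) : (C s.1 - X * C s.2).coeff k = 0 := by rw [h0, coeff_zero]
  exact hs (Prod.ext (by simpa using hcoeff 0) (by simpa using hcoeff 1))

lemma natDegree_C_sub_X_mul_C_le (s : B × B) : (C s.1 - X * C s.2).natDegree ≤ 1 := by
  compute_degree

lemma natDegree_C_sub_X_mul_C [DecidableEq B] (s : B × B) :
    (C s.1 - X * C s.2).natDegree = if s.2 ≠ 0 then 1 else 0 := by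
  split_ifs with h
  · exact natDegree_eq_of_le_of_coeff_ne_zero (natDegree_C_sub_X_mul_C_le s) (by simpa using h)
  · simp [not_not.1 h]

lemma coeff_card_prod_C_sub_X_mul_C (S : Multiset (B × B)) :
    (S.map fun s : B × B => C s.1 - X * C s.2).prod.coeff S.card =
      (-1) ^ S.card * (S.map Prod.snd).prod := by
  have hle : ∀ p ∈ S.map fun s : B × B => C s.1 - X * C s.2, p.natDegree ≤ 1 := by
    intro p hp
    obtain ⟨s, -, rfl⟩ := Multiset.mem_map.1 hp
    exact natDegree_C_sub_X_mul_C_le s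
  have hcoeff := coeff_multiset_prod_of_natDegree_le _ 1 hle
  rw [Multiset.card_map, mul_one, Multiset.map_map] at hcoeff
  rw [hcoeff, ← Multiset.card_map Prod.snd, ← Multiset.prod_map_neg, Multiset.map_map]
  simp

variable [IsDomain B] {S : Multiset (B × B)}

lemma prod_C_sub_X_mul_C_ne_zero (hS : 0 ∉ S) :
    (S.map fun s : B × B => C s.1 - X * C s.2).prod ≠ 0 :=
  Multiset.prod_ne_zero fun h => by
    obtain ⟨s, hs, h0⟩ := Multiset.mem_map.1 h
    exact C_sub_X_mul_C_ne_zero (fun hs0 => hS (hs0 ▸ hs)) h0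

lemma natDegree_prod_C_sub_X_mul_C [DecidableEq B] (hS : 0 ∉ S) :
    (S.map fun s : B × B => C s.1 - X * C s.2).prod.natDegree = S.countP (·.2 ≠ 0) := by
  induction S using Multiset.induction with
  | empty => simp
  | cons s S ih =>
    rw [Multiset.mem_cons, not_or] at hS
    rw [Multiset.map_cons, Multiset.prod_cons, Multiset.countP_cons,
      natDegree_mul (C_sub_X_mul_C_ne_zero (Ne.symm hS.1)) (prod_C_sub_X_mul_C_ne_zero hS.2),
      ih hS.2, natDegree_C_sub_X_mul_C, add_comm]

lemma natDegree_prod_C_sub_X_mul_C_le (S : Multiset (B × B)) :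
    (S.map fun s : B × B => C s.1 - X * C s.2).prod.natDegree ≤ S.card := by
  classical
  by_cases hS : 0 ∈ S
  · rw [Multiset.prod_eq_zero (Multiset.mem_map.2 ⟨0, hS, by simp⟩), natDegree_zero]
    exact Nat.zero_le _
  · exact (natDegree_prod_C_sub_X_mul_C hS).trans_le (Multiset.countP_le_card _ _)

end LinearForms

section EliminationResultant

/-- The pencil `P - xQ`, whose parameter `x` is the variable of the coefficient ring `B[X]`. -/
noncomputable def pencil {B : Type*} [CommRing B] (P Q : B[X]) : B[X][X] :=
  P.map C - C X * Q.map C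

/-- The resultant `Res_t(f(t), P(t) - x Q(t))` as a polynomial in `x`, where `f` and the pencil
have formal degrees `m` and `n`. It eliminates `t` from the equations `f(t) = 0` and
`x = P(t) / Q(t)`. -/
noncomputable def elimResultant {B : Type*} [CommRing B] (n m : ℕ) (P Q f : B[X]) : B[X] :=
  (f.map C).resultant (pencil P Q) m n

section CommRing

variable {B B' : Type*} [CommRing B] [CommRing B'] (σ : B →+* B') (n m : ℕ) (P Q f : B[X])

@[simp] lemma coeff_pencil (k : ℕ) : (pencil P Q).coeff k = C (P.coeff k) - X * C (Q.coeff k) := by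
  simp [pencil]

@[simp] lemma eval_C_pencil (τ : B) :
    (pencil P Q).eval (C τ) = C (P.eval τ) - X * C (Q.eval τ) := by
  simp [pencil, eval_map]

lemma pencil_map_mapRingHom : (pencil P Q).map (mapRingHom σ) = pencil (P.map σ) (Q.map σ) := by
  ext1 k
  simp

lemma pencil_map_eval₂RingHom (x : B') :
    (pencil P Q).map (eval₂RingHom σ x) = P.map σ - C x * Q.map σ := by
  ext k
  simpa using mul_comm _ _

variable {P Q} in
lemma natDegree_sub_C_mul_le {n : ℕ} (hP : P.natDegree ≤ n) (hQ : Q.natDegree ≤ n) (x : B) :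
    (P - C x * Q).natDegree ≤ n :=
  (natDegree_sub_le _ _).trans (max_le hP ((natDegree_C_mul_le _ _).trans hQ))

variable {P Q} in
lemma natDegree_pencil_le {n : ℕ} (hP : P.natDegree ≤ n) (hQ : Q.natDegree ≤ n) :
    (pencil P Q).natDegree ≤ n :=
  natDegree_sub_C_mul_le (natDegree_map_le.trans hP) (natDegree_map_le.trans hQ) X

lemma elimResultant_map :
    (elimResultant n m P Q f).map σ = elimResultant n m (P.map σ) (Q.map σ) (f.map σ) := by
  rw [elimResultant, elimResultant, ← coe_mapRingHom, ← resultant_map_map, pencil_map_mapRingHom,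
    map_map, mapRingHom_comp_C, ← map_map, coe_mapRingHom]

lemma eval₂_elimResultant (x : B') :
    (elimResultant n m P Q f).eval₂ σ x =
      (f.map σ).resultant (P.map σ - C x * Q.map σ) m n := by
  rw [elimResultant, ← coe_eval₂RingHom, ← resultant_map_map, pencil_map_eval₂RingHom, map_map]
  congr 2
  ext
  simp

lemma eval_elimResultant (x : B) :
    (elimResultant n m P Q f).eval x = f.resultant (P - C x * Q) m n := by
  rw [eval, eval₂_elimResultant, Polynomial.map_id, Polynomial.map_id, Polynomial.map_id]

end CommRing

lemma exists_injective_ringHom_isAlgClosed.{u} (B : Type u) [CommRing B] [IsDomain B] :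
    ∃ (L : Type u) (_ : Field L) (_ : IsAlgClosed L) (ι : B →+* L), Function.Injective ι :=
  ⟨AlgebraicClosure (FractionRing B), inferInstance, inferInstance,
    (algebraMap (FractionRing B) _).comp (algebraMap B (FractionRing B)),
    (algebraMap (FractionRing B) _).injective.comp (IsFractionRing.injective B _)⟩

section IsDomain

variable {B : Type*} [CommRing B] [IsDomain B] {n m : ℕ} {P Q f : B[X]}

/-- The values `(P(τ), Q(τ))` at the `m` points of the projective line where `f`, viewed as a form
of degree `m`, vanishes. The root at infinity has multiplicity `m - deg f` there, and `P`, `Q`,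
viewed as forms of degree `n`, take their coefficients of degree `n` as values at infinity. -/
noncomputable def rootValues (n m : ℕ) (P Q f : B[X]) : Multiset (B × B) :=
  .replicate (m - f.natDegree) (P.coeff n, Q.coeff n) + f.roots.map fun τ => (P.eval τ, Q.eval τ)

lemma card_rootValues (n : ℕ) (P Q : B[X]) (hf : f.natDegree ≤ m) (hs : f.Splits) :
    (rootValues n m P Q f).card = m := by
  rw [rootValues, Multiset.card_add, Multiset.card_replicate, Multiset.card_map,
    ← hs.natDegree_eq_card_roots, Nat.sub_add_cancel hf]

lemma resultant_eq_prod_eval_of_natDegree_le {g : B[X]} (hf : f.natDegree ≤ m)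
    (hg : g.natDegree ≤ n) (hs : f.Splits) :
    f.resultant g m n = (-1) ^ (n * (m - f.natDegree)) * f.leadingCoeff ^ n *
      (g.coeff n ^ (m - f.natDegree) * (f.roots.map g.eval).prod) := by
  conv_lhs => rw [← Nat.add_sub_cancel' hf]
  rw [resultant_add_left_deg _ _ _ _ _ le_rfl, resultant_eq_prod_eval _ _ _ hg hs]
  ring

lemma resultant_eq_prod_rootValues (P : B[X]) (hQ : Q.natDegree ≤ n) (hf : f.natDegree ≤ m)
    (hs : f.Splits) :
    f.resultant Q m n = (-1) ^ (n * (m - f.natDegree)) * f.leadingCoeff ^ n *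
      ((rootValues n m P Q f).map Prod.snd).prod := by
  simp [resultant_eq_prod_eval_of_natDegree_le hf hQ hs, rootValues]

lemma elimResultant_eq_prod (hP : P.natDegree ≤ n) (hQ : Q.natDegree ≤ n) (hf : f.natDegree ≤ m)
    (hs : f.Splits) :
    elimResultant n m P Q f =
      C ((-1) ^ (n * (m - f.natDegree)) * f.leadingCoeff ^ n) *
        ((rootValues n m P Q f).map fun s : B × B => C s.1 - X * C s.2).prod := by
  have hdeg : (f.map C).natDegree = f.natDegree := natDegree_map_eq_of_injective C_injective f
  rw [elimResultant, resultant_eq_prod_eval_of_natDegree_le (hdeg.trans_le hf)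
    (natDegree_pencil_le hP hQ) (hs.map C), hs.roots_map_of_injective C_injective, Multiset.map_map,
    hdeg, leadingCoeff_map_of_injective C_injective, rootValues]
  simp

section Degree

lemma neg_one_pow_mul_leadingCoeff_pow_ne_zero (hf0 : f ≠ 0) (k n : ℕ) :
    (-1) ^ k * f.leadingCoeff ^ n ≠ 0 :=
  mul_ne_zero (pow_ne_zero _ (neg_ne_zero.2 one_ne_zero))
    (pow_ne_zero _ (leadingCoeff_ne_zero.2 hf0))

variable (hP : P.natDegree ≤ n) (hQ : Q.natDegree ≤ n) (hf : f.natDegree ≤ m) (hs : f.Splits)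
  (hf0 : f ≠ 0) (hvalues : 0 ∉ rootValues n m P Q f)

include hP hQ hf hs hf0 hvalues

lemma elimResultant_ne_zero : elimResultant n m P Q f ≠ 0 := by
  rw [elimResultant_eq_prod hP hQ hf hs]
  exact mul_ne_zero (C_ne_zero.2 (neg_one_pow_mul_leadingCoeff_pow_ne_zero hf0 _ _))
    (prod_C_sub_X_mul_C_ne_zero hvalues)

lemma natDegree_elimResultant [DecidableEq B] :
    (elimResultant n m P Q f).natDegree = (rootValues n m P Q f).countP (·.2 ≠ 0) := by
  rw [elimResultant_eq_prod hP hQ hf hs,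
    natDegree_C_mul (neg_one_pow_mul_leadingCoeff_pow_ne_zero hf0 _ _),
    natDegree_prod_C_sub_X_mul_C hvalues]

end Degree

section Coeff

variable (hP : P.natDegree ≤ n) (hQ : Q.natDegree ≤ n) (hf : f.natDegree ≤ m)
include hP hQ hf

lemma natDegree_elimResultant_le_of_splits (hs : f.Splits) :
    (elimResultant n m P Q f).natDegree ≤ m := by
  rw [elimResultant_eq_prod hP hQ hf hs]
  exact (natDegree_C_mul_le _ _).trans
    ((natDegree_prod_C_sub_X_mul_C_le _).trans_eq (card_rootValues n P Q hf hs))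

lemma coeff_elimResultant_of_splits (hs : f.Splits) :
    (elimResultant n m P Q f).coeff m = (-1) ^ m * f.resultant Q m n := by
  have hcoeff := coeff_card_prod_C_sub_X_mul_C (rootValues n m P Q f)
  rw [card_rootValues n P Q hf hs] at hcoeff
  rw [elimResultant_eq_prod hP hQ hf hs, coeff_C_mul, hcoeff,
    resultant_eq_prod_rootValues P hQ hf hs]
  ring

lemma natDegree_elimResultant_le : (elimResultant n m P Q f).natDegree ≤ m := by
  obtain ⟨L, _, _, ι, hι⟩ := exists_injective_ringHom_isAlgClosed B
  rw [← natDegree_map_eq_of_injective hι, elimResultant_map]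
  exact natDegree_elimResultant_le_of_splits (natDegree_map_le.trans hP) (natDegree_map_le.trans hQ)
    (natDegree_map_le.trans hf) (IsAlgClosed.splits _)

lemma coeff_elimResultant :
    (elimResultant n m P Q f).coeff m = (-1) ^ m * f.resultant Q m n := by
  obtain ⟨L, _, _, ι, hι⟩ := exists_injective_ringHom_isAlgClosed B
  apply hι
  rw [← coeff_map, elimResultant_map, coeff_elimResultant_of_splits (natDegree_map_le.trans hP)
    (natDegree_map_le.trans hQ) (natDegree_map_le.trans hf) (IsAlgClosed.splits _),
    resultant_map_map, map_mul, map_pow, map_neg, map_one]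

end Coeff

end IsDomain

section Field

variable {K : Type*} [Field K] {n m : ℕ} {P Q f : K[X]}

/-- `P / Q` is a fraction in lowest terms and of degree `n`, so that `τ ↦ P(τ) / Q(τ)` is a
morphism of degree `n` from the projective line to itself. -/
structure IsRationalMap (n : ℕ) (P Q : K[X]) : Prop where
  isCoprime : IsCoprime P Q
  natDegree_left_le : P.natDegree ≤ n
  natDegree_right_le : Q.natDegree ≤ n
  coeff_ne_zero : P.coeff n ≠ 0 ∨ Q.coeff n ≠ 0

namespace IsRationalMap

lemma symm (h : IsRationalMap n P Q) : IsRationalMap n Q P :=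
  ⟨h.isCoprime.symm, h.natDegree_right_le, h.natDegree_left_le, h.coeff_ne_zero.symm⟩

lemma eval_right_ne_zero (h : IsRationalMap n P Q) {x τ : K} (hτ : P.eval τ = x * Q.eval τ) :
    Q.eval τ ≠ 0 := by
  intro hQ
  obtain ⟨a, b, hab⟩ := h.isCoprime
  simpa [hτ, hQ] using congrArg (eval τ) hab

lemma sub_C_mul_ne_zero (h : IsRationalMap n P Q) (hn : n ≠ 0) (x : K) : P - C x * Q ≠ 0 := by
  intro h0
  rw [sub_eq_zero] at h0
  have hQ : Q.natDegree = 0 :=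
    natDegree_eq_zero_of_isUnit (h.isCoprime.symm.isUnit_of_dvd ⟨C x, by rw [h0, mul_comm]⟩)
  have hQn : Q.coeff n = 0 := coeff_eq_zero_of_natDegree_lt (by omega)
  exact h.coeff_ne_zero.elim (· (by rw [h0, coeff_C_mul, hQn, mul_zero])) (· hQn)

lemma right_ne_zero (h : IsRationalMap n P Q) (hn : n ≠ 0) : Q ≠ 0 := by
  simpa using h.symm.sub_C_mul_ne_zero hn 0

lemma transcendental (h : IsRationalMap n P Q) (hn : n ≠ 0) :
    Transcendental K (algebraMap K[X] (RatFunc K) P / algebraMap K[X] (RatFunc K) Q) := by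
  refine RatFunc.transcendental_of_ne_C _ fun ⟨x, hx⟩ => h.sub_C_mul_ne_zero hn x ?_
  rw [div_eq_iff (RatFunc.algebraMap_ne_zero (h.right_ne_zero hn)), ← RatFunc.algebraMap_C,
    ← map_mul] at hx
  exact sub_eq_zero.2 (RatFunc.algebraMap_injective K hx)

end IsRationalMap

lemma zero_notMem_rootValues (h : IsRationalMap n P Q) (m : ℕ) (f : K[X]) :
    0 ∉ rootValues n m P Q f := by
  intro h0
  rcases Multiset.mem_add.1 h0 with h0 | h0
  · obtain ⟨hP, hQ⟩ := Prod.ext_iff.1 (Multiset.eq_of_mem_replicate h0)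
    exact h.coeff_ne_zero.elim (absurd hP.symm) (absurd hQ.symm)
  · obtain ⟨τ, -, hτ⟩ := Multiset.mem_map.1 h0
    obtain ⟨hP, hQ⟩ := Prod.ext_iff.1 hτ
    exact h.eval_right_ne_zero (x := 0) (hP.trans (zero_mul _).symm) hQ

lemma exists_root_of_eval_elimResultant_eq_zero {x : K} (hP : P.natDegree ≤ n)
    (hQ : Q.natDegree ≤ n) (hf : f.natDegree = m) (hf0 : f ≠ 0) (hs : f.Splits)
    (hx : (elimResultant n m P Q f).eval x = 0) :
    ∃ τ, f.eval τ = 0 ∧ P.eval τ = x * Q.eval τ := by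
  subst hf
  rw [eval_elimResultant, resultant_eq_prod_eval _ _ _ (natDegree_sub_C_mul_le hP hQ x) hs] at hx
  replace hx := (mul_eq_zero.1 hx).resolve_left (pow_ne_zero _ (leadingCoeff_ne_zero.2 hf0))
  obtain ⟨τ, hτ, h0⟩ := Multiset.mem_map.1 (Multiset.prod_eq_zero_iff.1 hx)
  exact ⟨τ, isRoot_of_mem_roots hτ, by simpa [sub_eq_zero] using h0⟩

lemma isCoprime_C_sub_X_mul_C {p q p' q' : K} (h : p * q' - p' * q ≠ 0) :
    IsCoprime (C p - X * C q) (C p' - X * C q') := by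
  have hinv : C (p * q' - p' * q) * C (p * q' - p' * q)⁻¹ = (1 : K[X]) := by
    rw [← C_mul, mul_inv_cancel₀ h, C_1]
  refine ⟨C (q' * (p * q' - p' * q)⁻¹), C (-q * (p * q' - p' * q)⁻¹), ?_⟩
  rw [← hinv]
  simp only [C_mul, C_sub, C_neg]
  ring

lemma separable_C_sub_X_mul_C (p : K) {q : K} (hq : q ≠ 0) : (C p - X * C q).Separable :=
  ⟨0, C (-q⁻¹), by simp [← C_mul, hq]⟩

lemma separable_elimResultant (hP : P.natDegree ≤ n) (hQ : Q.natDegree ≤ n)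
    (hf : f.natDegree = m) (hf0 : f ≠ 0) (hs : f.Splits) (hnodup : f.roots.Nodup)
    (hQ0 : ∀ τ ∈ f.roots, Q.eval τ ≠ 0)
    (hcross : ∀ τ ∈ f.roots, ∀ τ' ∈ f.roots, τ ≠ τ' →
      P.eval τ * Q.eval τ' - P.eval τ' * Q.eval τ ≠ 0) :
    (elimResultant n m P Q f).Separable := by
  classical
  have hprod : (∏ τ ∈ f.roots.toFinset, (C (P.eval τ) - X * C (Q.eval τ))).Separable := by
    simp only [← Multiset.mem_toFinset] at hQ0 hcross
    exact separable_prod' (fun τ hτ τ' hτ' hne => isCoprime_C_sub_X_mul_C (hcross τ hτ τ' hτ' hne))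
      fun τ hτ => separable_C_sub_X_mul_C _ (hQ0 τ hτ)
  rw [elimResultant_eq_prod hP hQ hf.le hs, mul_comm, rootValues, hf, Nat.sub_self,
    Multiset.replicate_zero, zero_add, Multiset.map_map]
  refine Separable.mul_unit ?_ (isUnit_C.2
    (neg_one_pow_mul_leadingCoeff_pow_ne_zero hf0 _ _).isUnit)
  rwa [Finset.prod, Multiset.toFinset_val, Multiset.dedup_eq_self.2 hnodup] at hprod

lemma natDegree_elimResultant_eq (hP : P.natDegree ≤ n) (hQ : Q.natDegree ≤ n)
    (hf : f.natDegree = m) (hf0 : f ≠ 0) (hs : f.Splits) (hQ0 : ∀ τ ∈ f.roots, Q.eval τ ≠ 0) :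
    (elimResultant n m P Q f).natDegree = m := by
  refine natDegree_eq_of_le_of_coeff_ne_zero (natDegree_elimResultant_le hP hQ hf.le) ?_
  subst hf
  rw [coeff_elimResultant hP hQ le_rfl, resultant_eq_prod_eval _ _ _ hQ hs]
  refine mul_ne_zero (by simp) (mul_ne_zero (by simpa using fun h => absurd h hf0) ?_)
  simpa [Multiset.prod_eq_zero_iff] using hQ0

end Field
end EliminationResultant

section Specialization

variable {R : Type*} [CommRing R]

lemma aevalAeval_map_algHom {A B : Type*} [CommRing A] [CommRing B] [Algebra R A] [Algebra R B]
    (g : A →ₐ[R] B) (y x : A) (Φ : R[X][X]) :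
    aevalAeval (g y) (g x) Φ = g (aevalAeval y x Φ) := by
  induction Φ using Polynomial.induction_on' with
  | add Φ Ψ hΦ hΨ => rw [map_add, map_add, map_add, hΦ, hΨ]
  | monomial k a => simp [← C_mul_X_pow_eq_monomial, aeval_algHom_apply]

variable {A F L : Type*} [CommRing A] [Algebra R A] [Field F] [Algebra R F] [Field L] [Algebra R L]

lemma liftAlgHom_mk'_eq_div {M : Submonoid A} {f : A →ₐ[R] F} (hf : ∀ q : M, IsUnit (f q)) (p : A)
    (q : M) :
    (IsLocalization.liftAlgHom hf : Localization M →ₐ[R] F) (IsLocalization.mk' _ p q) =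
      f p / f q :=
  (IsLocalization.lift_mk'_spec _ _ _ _).2 (mul_div_cancel₀ _ (hf q).ne_zero).symm

lemma liftAlgHom_injective {M : Submonoid A} {f : A →ₐ[R] F} (hf : ∀ q : M, IsUnit (f q))
    (hinj : Function.Injective f) :
    Function.Injective (IsLocalization.liftAlgHom hf : Localization M →ₐ[R] F) :=
  (IsLocalization.lift_injective_iff _).2 fun p q => by
    refine ⟨fun h => ?_, fun h => congrArg _ (hinj h)⟩
    obtain ⟨c, hc⟩ := (IsLocalization.eq_iff_exists M _).1 h
    exact (hf c).mul_left_cancel ((map_mul f _ _).symm.trans (hc ▸ map_mul f _ _))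

/-- Both evaluations factor through the localization of `A` at the prime ideal `ker f`. -/
lemma aevalAeval_div_eq_zero_of_injective (f : A →ₐ[R] F) {g : A →ₐ[R] L}
    (hg : Function.Injective g) {p₀ q₀ p₁ q₁ : A} {Φ : R[X][X]}
    (hΦ : aevalAeval (g p₁ / g q₁) (g p₀ / g q₀) Φ = 0) (hq₀ : f q₀ ≠ 0) (hq₁ : f q₁ ≠ 0) :
    aevalAeval (f p₁ / f q₁) (f p₀ / f q₀) Φ = 0 := by
  let M : Submonoid A := (nonZeroDivisors F).comap f
  have hf_unit (q : M) : IsUnit (f q) := (nonZeroDivisors.ne_zero q.2).isUnit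
  have hg_unit (q : M) : IsUnit (g q) := by
    refine ((map_ne_zero_iff _ hg).2 fun h => ?_).isUnit
    exact (hf_unit q).ne_zero (by rw [h, map_zero])
  let s₀ : M := ⟨q₀, mem_nonZeroDivisors_of_ne_zero hq₀⟩
  let s₁ : M := ⟨q₁, mem_nonZeroDivisors_of_ne_zero hq₁⟩
  have hlocal : aevalAeval (IsLocalization.mk' (Localization M) p₁ s₁)
      (IsLocalization.mk' (Localization M) p₀ s₀) Φ = 0 := by
    apply liftAlgHom_injective hg_unit hg
    rw [← aevalAeval_map_algHom, liftAlgHom_mk'_eq_div, liftAlgHom_mk'_eq_div, map_zero]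
    exact hΦ
  have hf_local := congrArg (IsLocalization.liftAlgHom hf_unit : Localization M →ₐ[R] F) hlocal
  rwa [← aevalAeval_map_algHom, liftAlgHom_mk'_eq_div, liftAlgHom_mk'_eq_div, map_zero]
    at hf_local

end Specialization

section ImplicitEquation

lemma resultant_eq_zero_of_isRoot {R : Type*} [CommRing R] {f g : R[X]} {m n : ℕ}
    (hf : f.natDegree ≤ m) (hg : g.natDegree ≤ n) (hmn : m ≠ 0 ∨ n ≠ 0) {t : R}
    (hft : f.IsRoot t) (hgt : g.IsRoot t) : f.resultant g m n = 0 := by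
  obtain ⟨p, q, -, -, hpq⟩ := exists_mul_add_mul_eq_C_resultant f g hf hg hmn
  simpa [hft.eq_zero, hgt.eq_zero] using (congrArg (eval t) hpq).symm

lemma isPrimitive_of_forall_map_evalRingHom_ne_zero {K : Type*} [Field K] [IsAlgClosed K]
    {p : K[X][X]} (hp : ∀ y : K, p.map (evalRingHom y) ≠ 0) : p.IsPrimitive := by
  rintro c ⟨q, rfl⟩
  refine isUnit_iff_degree_eq_zero.2 (by_contra fun hdeg => ?_)
  obtain ⟨y, hy⟩ := IsAlgClosed.exists_root c hdeg
  exact hp y (by simp [hy.eq_zero])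

lemma aevalAeval_eq_eval₂ {R A : Type*} [CommRing R] [CommRing A] [Algebra R A] (y x : A)
    (Φ : R[X][X]) :
    aevalAeval y x Φ = Φ.eval₂ (aeval y : R[X] →ₐ[R] A).toRingHom x := by
  induction Φ using Polynomial.induction_on' with
  | add Φ Ψ hΦ hΨ => rw [map_add, eval₂_add, hΦ, hΨ]
  | monomial k a => simp [← C_mul_X_pow_eq_monomial]

lemma aevalAeval_eq_eval_map_evalRingHom {R : Type*} [CommRing R] (y x : R) (Φ : R[X][X]) :
    aevalAeval y x Φ = (Φ.map (evalRingHom y)).eval x := by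
  rw [aevalAeval_eq_eval₂, eval_map]
  congr 1

lemma associated_coeff {R : Type*} [CommRing R] [IsDomain R] {p q : R[X]} (h : Associated p q)
    (k : ℕ) : Associated (p.coeff k) (q.coeff k) := by
  obtain ⟨u, rfl⟩ := h
  obtain ⟨c, hc, hcu⟩ := isUnit_iff.1 u.isUnit
  rw [← hcu, coeff_mul_C]
  exact associated_mul_unit_right _ _ hc

/-- By Gauss's lemma `Φ` is irreducible over the fraction field of `R`, which embeds into `L`. -/
lemma dvd_of_eval₂_eq_zero_of_irreducible {R L : Type*} [CommRing R] [IsDomain R]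
    [IsGCDMonoid R] [Field L] {g : R →+* L} (hg : Function.Injective g) {x : L}
    {Φ Ψ : R[X]} (hirr : Irreducible Φ) (hΦ : Φ.eval₂ g x = 0) (hΨ : Ψ.eval₂ g x = 0) : Φ ∣ Ψ := by
  have hdeg : Φ.natDegree ≠ 0 := fun h => by
    rw [eq_C_of_natDegree_eq_zero h, eval₂_C, map_eq_zero_iff g hg] at hΦ
    exact hirr.ne_zero (by rw [eq_C_of_natDegree_eq_zero h, hΦ, C_0])
  have hprim := hirr.isPrimitive hdeg
  apply hprim.dvd_of_fraction_map_dvd_fraction_map (K := FractionRing R)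
  by_contra hnd
  obtain ⟨a, b, hab⟩ := ((hprim.irreducible_iff_irreducible_map_fraction_map
    (K := FractionRing R)).1 hirr).coprime_iff_not_dvd.2 hnd
  have hlift : (IsFractionRing.lift hg).comp (algebraMap R (FractionRing R)) = g :=
    RingHom.ext (IsFractionRing.lift_algebraMap hg)
  simpa [eval₂_map, hlift, hΦ, hΨ] using congrArg (eval₂ (IsFractionRing.lift hg) x) hab

/-- The resultant `Res_t(P₁(t) - y Q₁(t), P₀(t) - x Q₀(t))` as a polynomial in `x` over the
polynomials in `y`. It vanishes on the curve parametrized by `x = P₀ / Q₀` and `y = P₁ / Q₁`. -/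
noncomputable def implicitResultant {K : Type*} [CommRing K] (n m : ℕ) (P₀ Q₀ P₁ Q₁ : K[X]) :
    K[X][X] :=
  elimResultant n m (P₀.map C) (Q₀.map C) (pencil P₁ Q₁)

section CommRing

variable {K : Type*} [CommRing K] (n m : ℕ) (P₀ Q₀ P₁ Q₁ : K[X])

lemma implicitResultant_map_evalRingHom (y : K) :
    (implicitResultant n m P₀ Q₀ P₁ Q₁).map (evalRingHom y) =
      elimResultant n m P₀ Q₀ (P₁ - C y * Q₁) := by
  have hid : (evalRingHom y).comp C = RingHom.id K := by ext; simp
  rw [implicitResultant, elimResultant_map, map_map, map_map, hid, Polynomial.map_id,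
    Polynomial.map_id, evalRingHom, pencil_map_eval₂RingHom, Polynomial.map_id, Polynomial.map_id]

variable {n m P₀ Q₀ P₁ Q₁}

lemma aevalAeval_implicitResultant_eq_zero {A : Type*} [CommRing A] [Algebra K A] {t x y : A}
    (hP₀ : P₀.natDegree ≤ n) (hQ₀ : Q₀.natDegree ≤ n) (hP₁ : P₁.natDegree ≤ m)
    (hQ₁ : Q₁.natDegree ≤ m) (hmn : m ≠ 0 ∨ n ≠ 0) (hx : aeval t P₀ = x * aeval t Q₀)
    (hy : aeval t P₁ = y * aeval t Q₁) :
    aevalAeval y x (implicitResultant n m P₀ Q₀ P₁ Q₁) = 0 := by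
  have hid : ((aeval y : K[X] →ₐ[K] A).toRingHom).comp C = algebraMap K A := by ext; simp
  have isRoot_sub {P Q : K[X]} {z : A} (h : aeval t P = z * aeval t Q) :
      (P.map (algebraMap K A) - C z * Q.map (algebraMap K A)).IsRoot t := by
    simp [eval_map_algebraMap, h]
  have hpencil : (pencil P₁ Q₁).map (aeval y : K[X] →ₐ[K] A).toRingHom =
      P₁.map (algebraMap K A) - C y * Q₁.map (algebraMap K A) :=
    pencil_map_eval₂RingHom _ _ _ _
  rw [aevalAeval_eq_eval₂, implicitResultant, eval₂_elimResultant, map_map, map_map, hid, hpencil]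
  exact resultant_eq_zero_of_isRoot
    (natDegree_sub_C_mul_le (natDegree_map_le.trans hP₁) (natDegree_map_le.trans hQ₁) y)
    (natDegree_sub_C_mul_le (natDegree_map_le.trans hP₀) (natDegree_map_le.trans hQ₀) x)
    hmn (isRoot_sub hy) (isRoot_sub hx)

end CommRing

section RationalMaps

variable {K : Type*} [Field K] {n m : ℕ} {P₀ Q₀ P₁ Q₁ : K[X]}
  (h₀ : IsRationalMap n P₀ Q₀) (h₁ : IsRationalMap m P₁ Q₁)

include h₀ h₁

lemma natDegree_implicitResultant_le : (implicitResultant n m P₀ Q₀ P₁ Q₁).natDegree ≤ m :=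
  natDegree_elimResultant_le (natDegree_map_le.trans h₀.natDegree_left_le)
    (natDegree_map_le.trans h₀.natDegree_right_le)
    (natDegree_pencil_le h₁.natDegree_left_le h₁.natDegree_right_le)

lemma dvd_implicitResultant {Φ : K[X][X]}
    (hΦ : aevalAeval (algebraMap K[X] (RatFunc K) P₁ / algebraMap K[X] (RatFunc K) Q₁)
      (algebraMap K[X] (RatFunc K) P₀ / algebraMap K[X] (RatFunc K) Q₀) Φ = 0)
    (hn : n ≠ 0) (hm : m ≠ 0) (hirr : Irreducible Φ) :
    Φ ∣ implicitResultant n m P₀ Q₀ P₁ Q₁ := by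
  have hX (P : K[X]) : aeval RatFunc.X P = algebraMap K[X] (RatFunc K) P := by
    rw [← RatFunc.algebraMap_X, aeval_algebraMap_apply, aeval_X_left_apply]
  have hmul {P Q : K[X]} (hQ : Q ≠ 0) : aeval RatFunc.X P =
      algebraMap K[X] (RatFunc K) P / algebraMap K[X] (RatFunc K) Q * aeval RatFunc.X Q := by
    rw [hX, hX, div_mul_cancel₀ _ (RatFunc.algebraMap_ne_zero hQ)]
  have hvanish := aevalAeval_implicitResultant_eq_zero h₀.natDegree_left_le h₀.natDegree_right_le
    h₁.natDegree_left_le h₁.natDegree_right_le (.inl hm) (hmul (h₀.right_ne_zero hn))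
    (hmul (h₁.right_ne_zero hm))
  rw [aevalAeval_eq_eval₂] at hΦ hvanish
  exact dvd_of_eval₂_eq_zero_of_irreducible (transcendental_iff_injective.1
    (h₁.transcendental hm)) hirr hΦ hvanish

variable [IsAlgClosed K]

lemma isPrimitive_implicitResultant (hm : m ≠ 0) :
    (implicitResultant n m P₀ Q₀ P₁ Q₁).IsPrimitive :=
  isPrimitive_of_forall_map_evalRingHom_ne_zero fun y => by
    rw [implicitResultant_map_evalRingHom]
    exact elimResultant_ne_zero h₀.natDegree_left_le h₀.natDegree_right_le
      (natDegree_sub_C_mul_le h₁.natDegree_left_le h₁.natDegree_right_le y) (IsAlgClosed.splits _)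
      (h₁.sub_C_mul_ne_zero hm y) (zero_notMem_rootValues h₀ m _)

lemma natDegree_coeff_implicitResultant [DecidableEq K] (hn : n ≠ 0) :
    ((implicitResultant n m P₀ Q₀ P₁ Q₁).coeff m).natDegree =
      (rootValues m n P₁ Q₁ Q₀).countP (·.2 ≠ 0) := by
  have hcoeff : (implicitResultant n m P₀ Q₀ P₁ Q₁).coeff m =
      C ((-1) ^ m * (-1) ^ (m * n)) * elimResultant m n P₁ Q₁ Q₀ := by
    rw [implicitResultant, coeff_elimResultant (natDegree_map_le.trans h₀.natDegree_left_le)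
      (natDegree_map_le.trans h₀.natDegree_right_le)
      (natDegree_pencil_le h₁.natDegree_left_le h₁.natDegree_right_le), resultant_comm,
      ← mul_assoc, elimResultant]
    simp
  rw [hcoeff, natDegree_C_mul (by simp), natDegree_elimResultant h₁.natDegree_left_le
    h₁.natDegree_right_le h₀.natDegree_right_le (IsAlgClosed.splits _) (h₀.right_ne_zero hn)
    (zero_notMem_rootValues h₁ n _)]

variable {Φ : K[X][X]}
  (hΦ : aevalAeval (algebraMap K[X] (RatFunc K) P₁ / algebraMap K[X] (RatFunc K) Q₁)
    (algebraMap K[X] (RatFunc K) P₀ / algebraMap K[X] (RatFunc K) Q₀) Φ = 0)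
include hΦ

lemma eval_fiber_eq_zero {x y : K} (hy : P₁ - C y * Q₁ ≠ 0)
    (hdeg : (P₁ - C y * Q₁).natDegree = m)
    (hx : (elimResultant n m P₀ Q₀ (P₁ - C y * Q₁)).IsRoot x) :
    (Φ.map (evalRingHom y)).eval x = 0 := by
  obtain ⟨τ, hτ₁, hτ₀⟩ := exists_root_of_eval_elimResultant_eq_zero h₀.natDegree_left_le
    h₀.natDegree_right_le hdeg hy (IsAlgClosed.splits _) hx
  replace hτ₁ : P₁.eval τ = y * Q₁.eval τ := by simpa [sub_eq_zero] using hτ₁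
  have hQ₀ := h₀.eval_right_ne_zero hτ₀
  have hQ₁ := h₁.eval_right_ne_zero hτ₁
  rw [← aevalAeval_eq_eval_map_evalRingHom, eq_div_of_mul_eq hQ₀ hτ₀.symm,
    eq_div_of_mul_eq hQ₁ hτ₁.symm]
  simpa using aevalAeval_div_eq_zero_of_injective (aeval τ : K[X] →ₐ[K] K)
    (g := IsScalarTower.toAlgHom K K[X] (RatFunc K)) (RatFunc.algebraMap_injective K) hΦ
    (by simpa using hQ₀) (by simpa using hQ₁)

/-- The `m` distinct points of the fiber over `y` give `m` distinct roots `x` of `Φ(·, y)`. -/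
lemma le_natDegree_of_separable_fiber {y : K} (hΦy : Φ.map (evalRingHom y) ≠ 0)
    (hy : P₁ - C y * Q₁ ≠ 0) (hdeg : (P₁ - C y * Q₁).natDegree = m)
    (hfiber : (elimResultant n m P₀ Q₀ (P₁ - C y * Q₁)).natDegree = m)
    (hsep : (elimResultant n m P₀ Q₀ (P₁ - C y * Q₁)).Separable) : m ≤ Φ.natDegree := by
  set r := elimResultant n m P₀ Q₀ (P₁ - C y * Q₁)
  have hsub : r.roots ≤ (Φ.map (evalRingHom y)).roots :=
    (Multiset.le_iff_subset (nodup_roots hsep)).2 fun x hx =>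
      (mem_roots hΦy).2 (eval_fiber_eq_zero h₀ h₁ hΦ hy hdeg (isRoot_of_mem_roots hx))
  calc m = r.roots.card := by rw [← hfiber, (IsAlgClosed.splits r).natDegree_eq_card_roots]
    _ ≤ (Φ.map (evalRingHom y)).roots.card := Multiset.card_le_card hsub
    _ ≤ (Φ.map (evalRingHom y)).natDegree := card_roots' _
    _ ≤ Φ.natDegree := natDegree_map_le

lemma associated_implicitResultant (hn : n ≠ 0) (hm : m ≠ 0) (hirr : Irreducible Φ) {y : K}
    (hdeg : (P₁ - C y * Q₁).natDegree = m)
    (hfiber : (elimResultant n m P₀ Q₀ (P₁ - C y * Q₁)).natDegree = m)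
    (hsep : (elimResultant n m P₀ Q₀ (P₁ - C y * Q₁)).Separable) :
    Associated Φ (implicitResultant n m P₀ Q₀ P₁ Q₁) := by
  obtain ⟨Ψ, hΨ⟩ := dvd_implicitResultant h₀ h₁ hΦ hn hm hirr
  have hprim := isPrimitive_implicitResultant h₀ h₁ hm
  have hne : (implicitResultant n m P₀ Q₀ P₁ Q₁).map (evalRingHom y) ≠ 0 := by
    rw [implicitResultant_map_evalRingHom]
    exact hsep.ne_zero
  have hΦy : Φ.map (evalRingHom y) ≠ 0 := fun h => hne <| by
    rw [hΨ, Polynomial.map_mul, h, zero_mul]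
  have hle := le_natDegree_of_separable_fiber h₀ h₁ hΦ hΦy (h₁.sub_C_mul_ne_zero hm y) hdeg hfiber
    hsep
  have hadd : Φ.natDegree + Ψ.natDegree ≤ m := by
    rw [← natDegree_mul hirr.ne_zero (right_ne_zero_of_mul (hΨ ▸ hprim.ne_zero)), ← hΨ]
    exact natDegree_implicitResultant_le h₀ h₁
  obtain ⟨c, rfl⟩ := natDegree_eq_zero.1 (show Ψ.natDegree = 0 by omega)
  have hc : IsUnit c := hprim c (hΨ ▸ dvd_mul_left _ _)
  exact hΨ ▸ associated_mul_unit_right _ _ (isUnit_C.2 hc)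

lemma natDegree_eq_and_natDegree_coeff_eq [DecidableEq K] (hn : n ≠ 0) (hm : m ≠ 0)
    (hirr : Irreducible Φ) {y : K} (hdeg : (P₁ - C y * Q₁).natDegree = m)
    (hfiber : (elimResultant n m P₀ Q₀ (P₁ - C y * Q₁)).natDegree = m)
    (hsep : (elimResultant n m P₀ Q₀ (P₁ - C y * Q₁)).Separable) :
    Φ.natDegree = m ∧ (Φ.coeff m).natDegree = (rootValues m n P₁ Q₁ Q₀).countP (·.2 ≠ 0) := by
  have hassoc := associated_implicitResultant h₀ h₁ hΦ hn hm hirr hdeg hfiber hsep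
  have hle : m ≤ (implicitResultant n m P₀ Q₀ P₁ Q₁).natDegree := by
    rw [← implicitResultant_map_evalRingHom] at hfiber
    exact hfiber.symm.trans_le natDegree_map_le
  rw [natDegree_eq_natDegree (degree_eq_degree_of_associated hassoc),
    natDegree_eq_natDegree (degree_eq_degree_of_associated (associated_coeff hassoc m))]
  exact ⟨(natDegree_implicitResultant_le h₀ h₁).antisymm hle,
    natDegree_coeff_implicitResultant h₀ h₁ hn⟩

end RationalMaps

end ImplicitEquation

section Bivariate

variable {R : Type*} [CommRing R]

/-- Bivariate polynomials as iterated polynomials: the variable `0` is sent to the outer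
indeterminate and the variable `1` to the inner one. -/
noncomputable def iteratedEquiv (R : Type*) [CommRing R] :
    MvPolynomial (Fin 2) R ≃ₐ[R] R[X][X] :=
  (MvPolynomial.finSuccEquiv R 1).trans (mapAlgEquiv (MvPolynomial.uniqueAlgEquiv R (Fin 1)))

lemma coeff_coeff_iteratedEquiv (φ : MvPolynomial (Fin 2) R) (i j : ℕ) :
    ((iteratedEquiv R φ).coeff i).coeff j =
      φ.coeff (Finsupp.single 0 i + Finsupp.single 1 j) := by
  have hcons : (Finsupp.single default j).cons i =
      (Finsupp.single 0 i + Finsupp.single 1 j : Fin 2 →₀ ℕ) := by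
    ext k
    fin_cases k
    · simp
    · simpa using Finsupp.cons_succ (0 : Fin 1) i (Finsupp.single default j)
  rw [← hcons, ← MvPolynomial.finSuccEquiv_coeff_coeff, ← MvPolynomial.coeff_uniqueAlgEquiv]
  simp [iteratedEquiv]

lemma natDegree_iteratedEquiv (φ : MvPolynomial (Fin 2) R) :
    (iteratedEquiv R φ).natDegree = φ.degreeOf 0 := by
  rw [← MvPolynomial.natDegree_finSuccEquiv]
  exact natDegree_map_eq_of_injective (MvPolynomial.uniqueAlgEquiv R (Fin 1)).injective _

lemma aevalAeval_iteratedEquiv {A : Type*} [CommRing A] [Algebra R A] (x y : A)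
    (φ : MvPolynomial (Fin 2) R) :
    aevalAeval y x (iteratedEquiv R φ) = MvPolynomial.aeval ![x, y] φ := by
  suffices (aevalAeval y x).comp (iteratedEquiv R).toAlgHom = MvPolynomial.aeval ![x, y] from
    DFunLike.congr_fun this φ
  refine MvPolynomial.algHom_ext fun i => ?_
  fin_cases i
  · have hX : MvPolynomial.finSuccEquiv R 1 (MvPolynomial.X 0) = X :=
      MvPolynomial.finSuccEquiv_X_zero
    simp [iteratedEquiv, hX]
  · have hX : MvPolynomial.finSuccEquiv R 1 (MvPolynomial.X 1) = C (MvPolynomial.X 0) :=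
      MvPolynomial.finSuccEquiv_X_succ (j := 0)
    simp [iteratedEquiv, hX]

end Bivariate

section SparsePolynomials

lemma coeff_polyOfCoeffs (S : Finset ℕ) (c : {s // s ∈ S} → ℂ) (k : ℕ) :
    (polyOfCoeffs S c).coeff k = if h : k ∈ S then c ⟨k, h⟩ else 0 := by
  simp only [polyOfCoeffs, finsetSum_coeff, coeff_C_mul_X_pow]
  split_ifs with h
  · rw [Finset.sum_eq_single_of_mem ⟨k, h⟩ (Finset.mem_attach _ _)
      fun s _ hs => if_neg fun hk => hs (Subtype.ext hk.symm), if_pos rfl]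
  · exact Finset.sum_eq_zero fun s _ => if_neg fun hk : k = s => h (hk ▸ s.2)

lemma polyOfCoeffs_coeff {S : Finset ℕ} {f : ℂ[X]} (hf : f.support ⊆ S) :
    polyOfCoeffs S (fun s => f.coeff s) = f := by
  ext k
  rw [coeff_polyOfCoeffs]
  split_ifs with hk
  · rfl
  · exact (notMem_support_iff.1 fun h => hk (hf h)).symm

lemma support_polyOfCoeffs_subset (S : Finset ℕ) (c : {s // s ∈ S} → ℂ) :
    (polyOfCoeffs S c).support ⊆ S := fun k hk => by
  by_contra hkS
  rw [mem_support_iff, coeff_polyOfCoeffs, dif_neg hkS] at hk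
  exact hk rfl

lemma support_polyOfCoeffs {S : Finset ℕ} {c : {s // s ∈ S} → ℂ} (hc : ∀ s, c s ≠ 0) :
    (polyOfCoeffs S c).support = S := by
  ext k
  rw [mem_support_iff, coeff_polyOfCoeffs]
  split_ifs with hk <;> simp [hk, hc]

lemma natDegree_le_of_support_subset {R : Type*} [Semiring R] {S : Finset ℕ} {f : R[X]} {n : ℕ}
    (hf : f.support ⊆ S) (hn : ∀ s ∈ S, s ≤ n) : f.natDegree ≤ n :=
  natDegree_le_iff_coeff_eq_zero.2 fun k hk =>
    notMem_support_iff.1 fun h => hk.not_ge (hn k (hf h))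

lemma exists_sub_eq_of_support_subset_union {R : Type*} [Ring R] {S T : Finset ℕ} {f : R[X]}
    (hf : f.support ⊆ S ∪ T) : ∃ g h : R[X], g.support ⊆ S ∧ h.support ⊆ T ∧ g - h = f := by
  have hcoeff (k : ℕ) : (∑ s ∈ S, monomial s (f.coeff s)).coeff k =
      if k ∈ S then f.coeff k else 0 := by
    simp [finsetSum_coeff, coeff_monomial]
  refine ⟨∑ s ∈ S, monomial s (f.coeff s), ∑ s ∈ S, monomial s (f.coeff s) - f, fun k => ?_,
    fun k => ?_, sub_sub_cancel _ _⟩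
  · rw [mem_support_iff, hcoeff]
    exact fun h => by_contra fun hk => h (if_neg hk)
  · rw [mem_support_iff, coeff_sub, hcoeff]
    split_ifs with hk
    · simp
    · intro h
      exact (Finset.mem_union.1 (hf (mem_support_iff.2 (by simpa using h)))).resolve_left hk

variable {ι : Type*} {SS : ι → Finset ℕ}

/-- The member `i` of the family of polynomials with supports `SS` and joint coefficient vector
`c`. -/
noncomputable def sparsePoly (c : (Σ i, {s // s ∈ SS i}) → ℂ) (i : ι) : ℂ[X] :=
  polyOfCoeffs (SS i) fun s => c ⟨i, s⟩

/-- The polynomial with support `SS i` whose coefficients are indeterminates. -/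
noncomputable def genericPoly (SS : ι → Finset ℕ) (i : ι) :
    (MvPolynomial (Σ i, {s // s ∈ SS i}) ℂ)[X] :=
  ∑ s ∈ (SS i).attach, C (.X ⟨i, s⟩) * X ^ (s : ℕ)

@[simp] lemma map_eval_genericPoly (c : (Σ i, {s // s ∈ SS i}) → ℂ) (i : ι) :
    (genericPoly SS i).map (MvPolynomial.eval c) = sparsePoly c i := by
  simp [genericPoly, sparsePoly, polyOfCoeffs, Polynomial.map_sum]

lemma eval_coeff_genericPoly (c : (Σ i, {s // s ∈ SS i}) → ℂ) (i : ι) (k : ℕ) :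
    MvPolynomial.eval c ((genericPoly SS i).coeff k) = (sparsePoly c i).coeff k := by
  rw [← coeff_map, map_eval_genericPoly]

lemma support_genericPoly (SS : ι → Finset ℕ) (i : ι) : (genericPoly SS i).support = SS i := by
  ext k
  rw [mem_support_iff]
  refine ⟨not_imp_comm.1 fun hk => MvPolynomial.funext fun c => ?_, fun hk h => ?_⟩
  · rw [eval_coeff_genericPoly, sparsePoly, coeff_polyOfCoeffs, dif_neg hk, map_zero]
  · simpa [h, sparsePoly, coeff_polyOfCoeffs, hk] using eval_coeff_genericPoly (SS := SS) 1 i k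

lemma eval_eval_genericPoly (c : (Σ i, {s // s ∈ SS i}) → ℂ) (i : ι) (τ : ℂ) :
    MvPolynomial.eval c ((genericPoly SS i).eval (MvPolynomial.C τ)) =
      (sparsePoly c i).eval τ := by
  rw [← map_eval_genericPoly, eval_map, ← eval₂_at_apply, MvPolynomial.eval_C]

lemma sparsePoly_coeff {f : ι → ℂ[X]} {i : ι} (hf : (f i).support ⊆ SS i) :
    sparsePoly (fun p : Σ i, {s // s ∈ SS i} => (f p.1).coeff p.2) i = f i := by
  rw [sparsePoly, polyOfCoeffs_coeff hf]

lemma exists_sparsePoly_eq_X_pow {i j : ι} (hij : i ≠ j) {s t : ℕ} (hs : s ∈ SS i)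
    (ht : t ∈ SS j) :
    ∃ c : (Σ i, {s // s ∈ SS i}) → ℂ, sparsePoly c i = X ^ s ∧ sparsePoly c j = X ^ t := by
  classical
  let f : ι → ℂ[X] := Function.update (fun _ => X ^ t) i (X ^ s)
  have hi : f i = X ^ s := Function.update_self ..
  have hj : f j = X ^ t := Function.update_of_ne hij.symm ..
  exact ⟨_, (sparsePoly_coeff (by simpa [hi] using hs)).trans hi,
    (sparsePoly_coeff (by simpa [hj] using ht)).trans hj⟩

end SparsePolynomials

lemma eval_ne_zero_of_isCoprime_reflect {K : Type*} [Field K] {p q : K[X]} {m n : ℕ}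
    (hp : p.natDegree ≤ m) (hq : q.natDegree ≤ n) (h : IsCoprime (p.reflect m) (q.reflect n))
    {τ : K} (hτ : τ ≠ 0) (hpτ : p.eval τ = 0) : q.eval τ ≠ 0 := by
  let _ := invertibleOfNonzero hτ
  have heval {f : K[X]} {N : ℕ} (hf : f.natDegree ≤ N) :
      (f.reflect N).eval (⅟τ) = 0 ↔ f.eval τ = 0 :=
    eval₂_reflect_eq_zero_iff (RingHom.id K) τ N f hf
  have hcop := h.map (evalRingHom (⅟τ))
  rw [coe_evalRingHom, (heval hp).2 hpτ, isCoprime_zero_left] at hcop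
  exact mt (heval hq).2 hcop.ne_zero

section GenericMaps

open Filter

variable {ι : Type*} {SS : ι → Finset ℕ} {i j : ι}

/-- Reversing the polynomials removes the possible common root `0`. -/
lemma eventually_no_common_nonzero_root_sparsePoly (hij : i ≠ j) (hi : (SS i).Nonempty)
    (hj : (SS j).Nonempty) :
    ∀ᶠ c in zariskiGeneric (Σ i, {s // s ∈ SS i}) ℂ, ∀ τ ≠ 0,
      (sparsePoly c i).eval τ = 0 → (sparsePoly c j).eval τ ≠ 0 := by
  have hne {k : ι} (hk : (SS k).Nonempty) : genericPoly SS k ≠ 0 := by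
    rwa [← support_nonempty, support_genericPoly]
  obtain ⟨c₀, hi₀, hj₀⟩ := exists_sparsePoly_eq_X_pow (SS := SS) hij
    (support_genericPoly SS i ▸ natTrailingDegree_mem_support_of_nonzero (hne hi))
    (support_genericPoly SS j ▸ natDegree_mem_support_of_nonzero (hne hj))
  have hlead : MvPolynomial.eval c₀ (genericPoly SS i).reverse.leadingCoeff ≠ 0 := by
    rw [reverse_leadingCoeff, trailingCoeff, eval_coeff_genericPoly, hi₀, coeff_X_pow_self]
    exact one_ne_zero
  have hcop : IsCoprime ((genericPoly SS i).reverse.map (MvPolynomial.eval c₀))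
      ((genericPoly SS j).reverse.map (MvPolynomial.eval c₀)) := by
    rw [reverse, reverse, ← reflect_map, ← reflect_map, map_eval_genericPoly,
      map_eval_genericPoly, hj₀, reflect_monomial, revAt_le le_rfl, Nat.sub_self, pow_zero]
    exact isCoprime_one_right
  filter_upwards [eventually_zariskiGeneric_isCoprime_map _ _ hlead hcop] with c ⟨_, hc⟩ τ hτ
  simp only [reverse, ← reflect_map, map_eval_genericPoly] at hc
  refine eval_ne_zero_of_isCoprime_reflect ?_ ?_ hc hτ <;>
    exact map_eval_genericPoly c _ ▸ natDegree_map_le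

lemma support_sparsePoly {c : (Σ i, {s // s ∈ SS i}) → ℂ} (hc : ∀ p, c p ≠ 0) (i : ι) :
    (sparsePoly c i).support = SS i :=
  support_polyOfCoeffs fun _ => hc _

lemma natDegree_sparsePoly_le (c : (Σ i, {s // s ∈ SS i}) → ℂ) {n : ℕ}
    (hn : ∀ s ∈ SS i, s ≤ n) : (sparsePoly c i).natDegree ≤ n :=
  natDegree_le_of_support_subset (support_polyOfCoeffs_subset _ _) hn

lemma eventually_isRationalMap_sparsePoly [Finite ι] {n : ℕ} (hij : i ≠ j) (hi : (SS i).Nonempty)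
    (hj : (SS j).Nonempty) (h0 : 0 ∈ SS i ∪ SS j) (hn : n ∈ SS i ∪ SS j)
    (hmax : ∀ s ∈ SS i ∪ SS j, s ≤ n) :
    ∀ᶠ c in zariskiGeneric (Σ i, {s // s ∈ SS i}) ℂ,
      IsRationalMap n (sparsePoly c i) (sparsePoly c j) := by
  filter_upwards [eventually_zariskiGeneric_forall_ne_zero,
    eventually_no_common_nonzero_root_sparsePoly hij hi hj] with c hc hroot
  have hcoeff {k : ℕ} (hk : k ∈ SS i ∪ SS j) :
      (sparsePoly c i).coeff k ≠ 0 ∨ (sparsePoly c j).coeff k ≠ 0 := by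
    rwa [← mem_support_iff, ← mem_support_iff, support_sparsePoly hc, support_sparsePoly hc,
      ← Finset.mem_union]
  refine ⟨(isCoprime_iff_aeval_ne_zero_of_isAlgClosed ℂ ℂ _ _).2 fun τ => ?_,
    natDegree_sparsePoly_le c fun s hs => hmax s (Finset.mem_union_left _ hs),
    natDegree_sparsePoly_le c fun s hs => hmax s (Finset.mem_union_right _ hs), hcoeff hn⟩
  rcases eq_or_ne τ 0 with rfl | hτ
  · simpa only [coe_aeval_eq_eval, ← coeff_zero_eq_eval_zero] using hcoeff h0
  · simpa only [coe_aeval_eq_eval, or_iff_not_imp_left, not_not] using hroot τ hτ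

end GenericMaps

section SeparatingFiber

open Filter

variable {K : Type*} [Field K]

lemma eq_of_forall_pow_eq_pow {S : Finset ℕ} (hS : (S.filter (· ≠ 0)).gcd id = 1) {τ σ : K}
    (hσ : σ ≠ 0) (h : ∀ s ∈ S, τ ^ s = σ ^ s) : τ = σ := by
  have hdvd : orderOf (τ / σ) ∣ (S.filter (· ≠ 0)).gcd id :=
    Finset.dvd_gcd fun s hs => orderOf_dvd_of_pow_eq_one <| by
      rw [id, div_pow, h s (Finset.mem_filter.1 hs).1, div_self (pow_ne_zero s hσ)]
  rw [hS, Nat.dvd_one, orderOf_eq_one_iff] at hdvd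
  exact (div_eq_one_iff_eq hσ).1 hdvd

lemma eventually_cofinite_forall_eval_ne {p : K[X]} (hp : p ≠ 0) (h : K[X]) :
    ∀ᶠ a in cofinite, ∀ σ, p.eval σ = 0 → h.eval σ ≠ a := by
  refine ((p.rootSet_finite K).image h.eval).subset fun a ha => ?_
  simpa [mem_rootSet, hp] using ha

/-- If `σ` and `ζσ` are roots of `h - a`, then `σ` is a root of `h(ζx) - h(x)`. As there are
finitely many `ζ` with `ζ ^ N = 1`, for all but finitely many `a` this polynomial must be zero. -/
lemma eventually_cofinite_pow_eq_of_mem_support (h : K[X]) {N : ℕ} (hN : N ≠ 0) :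
    ∀ᶠ a in cofinite, ∀ τ σ, h.eval τ = a → h.eval σ = a → τ ^ N = σ ^ N →
      ∀ s ∈ h.support, τ ^ s = σ ^ s := by
  classical
  have hζ : ∀ᶠ a in cofinite, ∀ ζ ∈ nthRootsFinset N (1 : K), h.comp (C ζ * X) - h ≠ 0 →
      ∀ σ, (h.comp (C ζ * X) - h).eval σ = 0 → h.eval σ ≠ a :=
    (eventually_all_finset _).2 fun ζ _ =>
      eventually_imp_distrib_left.2 fun hne => eventually_cofinite_forall_eval_ne hne h
  filter_upwards [hζ] with a ha τ σ hτ hσ hpow s hs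
  rcases eq_or_ne σ 0 with rfl | hσ0
  · rw [zero_pow hN] at hpow
    rw [eq_zero_of_pow_eq_zero hpow]
  have hmem : τ / σ ∈ nthRootsFinset N (1 : K) :=
    (mem_nthRootsFinset (Nat.pos_of_ne_zero hN) _).2 <| by
      rw [div_pow, hpow, div_self (pow_ne_zero N hσ0)]
  have heq : h.comp (C (τ / σ) * X) - h = 0 := by
    by_contra hne
    refine ha _ hmem hne σ ?_ hσ
    simp [eval_comp, div_mul_cancel₀ τ hσ0, hτ, hσ]
  have hcoeff := congrArg (coeff · s) (sub_eq_zero.1 heq)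
  simp only [comp_C_mul_X_coeff] at hcoeff
  rwa [mul_eq_left₀ (mem_support_iff.1 hs), div_pow, div_eq_one_iff_eq (pow_ne_zero s hσ0)]
    at hcoeff

lemma eventually_cofinite_nodup_roots_sub_C [CharZero K] {h : K[X]} (hh : 0 < h.natDegree) :
    ∀ᶠ a in cofinite, (h - C a).roots.Nodup := by
  classical
  have hd : derivative h ≠ 0 := mt derivative_eq_zero.1 hh.ne'
  filter_upwards [eventually_cofinite_forall_eval_ne hd h] with a ha
  have hne : h - C a ≠ 0 := ne_zero_of_natDegree_gt (hh.trans_eq natDegree_sub_C.symm)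
  refine Multiset.nodup_iff_count_le_one.2 fun σ => not_lt.1 fun hlt => ?_
  rw [count_roots, one_lt_rootMultiplicity_iff_isRoot hne] at hlt
  refine ha σ (by simpa [IsRoot] using hlt.2) (by simpa [IsRoot, sub_eq_zero] using hlt.1)

lemma exists_separating_fiber [CharZero K] {S T : Finset ℕ} {N m : ℕ} (hN : N ∈ S) (hN0 : N ≠ 0)
    (h0 : 0 ∈ T) (hm : m ∈ T) (hmax : ∀ s ∈ T, s ≤ m) (hm0 : m ≠ 0)
    (hgcd : ((S ∪ T).filter (· ≠ 0)).gcd id = 1) :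
    ∃ f : K[X], f.support ⊆ T ∧ f.natDegree = m ∧ f.roots.Nodup ∧ (∀ τ ∈ f.roots, τ ≠ 0) ∧
      ∀ τ ∈ f.roots, ∀ σ ∈ f.roots, (∀ s ∈ S, τ ^ s = σ ^ s) → τ = σ := by
  classical
  let h : K[X] := ∑ s ∈ T, X ^ s
  have hcoeff (k : ℕ) : h.coeff k = if k ∈ T then 1 else 0 := by
    simp [h, finsetSum_coeff, coeff_X_pow]
  have hsupp : h.support = T := by
    ext k
    simp [hcoeff]
  have hdeg : h.natDegree = m := natDegree_eq_of_le_of_coeff_ne_zero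
    (natDegree_le_of_support_subset hsupp.subset hmax) (by simp [hcoeff, hm])
  obtain ⟨a, hsep, hzero, hpow⟩ := ((eventually_cofinite_nodup_roots_sub_C (h := h) (by omega)).and
    ((eventually_cofinite_forall_eval_ne X_ne_zero h).and
      (eventually_cofinite_pow_eq_of_mem_support h hN0))).exists
  have hroot {τ : K} (hτ : τ ∈ (h - C a).roots) : h.eval τ = a := by
    simpa [sub_eq_zero] using isRoot_of_mem_roots hτ
  have hτ0 : ∀ τ ∈ (h - C a).roots, τ ≠ 0 := fun τ hτ hτ0 =>
    hzero τ (by simpa using hτ0) (hroot hτ)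
  refine ⟨h - C a, fun k hk => ?_, natDegree_sub_C.trans hdeg, hsep, hτ0, fun τ hτ σ hσ hS =>
    eq_of_forall_pow_eq_pow hgcd (hτ0 σ hσ) fun s hs => ?_⟩
  · by_contra hkT
    have hk0 : k ≠ 0 := fun h => hkT (h ▸ h0)
    simp [hcoeff, hkT, coeff_C, hk0] at hk
  · rcases Finset.mem_union.1 hs with hs | hs
    · exact hS s hs
    · exact hpow τ σ (hroot hτ) (hroot hσ) (hS N hN) s (hsupp ▸ hs)

end SeparatingFiber

section GenericFiber

open Filter

lemma pow_eq_one_of_forall_pow_eq_pow {M : Type*} [Monoid M] {S T : Finset ℕ} (hS : S.Nonempty)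
    (hT : T.Nonempty) (h0 : 0 ∈ S ∪ T) {ζ : M} (h : ∀ s ∈ S, ∀ t ∈ T, ζ ^ s = ζ ^ t) {s : ℕ}
    (hs : s ∈ S ∪ T) : ζ ^ s = 1 := by
  obtain ⟨s₀, hs₀⟩ := hS
  obtain ⟨t₀, ht₀⟩ := hT
  have hconst {k l : ℕ} (hk : k ∈ S ∪ T) (hl : l ∈ S ∪ T) : ζ ^ k = ζ ^ l := by
    have hval {k : ℕ} (hk : k ∈ S ∪ T) : ζ ^ k = ζ ^ t₀ :=
      (Finset.mem_union.1 hk).elim (h k · t₀ ht₀) fun hk =>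
        (h s₀ hs₀ k hk).symm.trans (h s₀ hs₀ t₀ ht₀)
    rw [hval hk, hval hl]
  rw [hconst hs h0, pow_zero]

section Evaluation

variable {ι : Type*} {SS : ι → Finset ℕ} {i j : ι}

lemma eventually_eval_sparsePoly_ne_zero (hi : (SS i).Nonempty) {τ : ℂ} (hτ : τ ≠ 0) :
    ∀ᶠ c in zariskiGeneric (Σ i, {s // s ∈ SS i}) ℂ, (sparsePoly c i).eval τ ≠ 0 := by
  obtain ⟨s, hs⟩ := hi
  simp only [← eval_eval_genericPoly]
  refine eventually_zariskiGeneric_eval_ne_zero _ (c₀ := fun p => (X ^ s : ℂ[X]).coeff p.2) ?_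
  rw [eval_eval_genericPoly, sparsePoly_coeff (f := fun _ => X ^ s) (by simpa using hs)]
  simp [hτ]

lemma eventually_eval_mul_eval_sub_ne_zero (hij : i ≠ j) (hi : (SS i).Nonempty)
    (hj : (SS j).Nonempty) (h0 : 0 ∈ SS i ∪ SS j) {τ σ : ℂ} (hσ : σ ≠ 0)
    (hτσ : ∃ s ∈ SS i ∪ SS j, τ ^ s ≠ σ ^ s) :
    ∀ᶠ c in zariskiGeneric (Σ i, {s // s ∈ SS i}) ℂ,
      (sparsePoly c i).eval τ * (sparsePoly c j).eval σ -
        (sparsePoly c i).eval σ * (sparsePoly c j).eval τ ≠ 0 := by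
  obtain ⟨s, hs, t, ht, hst⟩ : ∃ s ∈ SS i, ∃ t ∈ SS j, (τ / σ) ^ s ≠ (τ / σ) ^ t := by
    by_contra! h
    obtain ⟨k, hk, hne⟩ := hτσ
    refine hne ((div_eq_one_iff_eq (pow_ne_zero k hσ)).1 ?_)
    rw [← div_pow, pow_eq_one_of_forall_pow_eq_pow hi hj h0 h hk]
  obtain ⟨c₀, hi₀, hj₀⟩ := exists_sparsePoly_eq_X_pow hij hs ht
  simp only [← eval_eval_genericPoly, ← map_mul, ← map_sub]
  refine eventually_zariskiGeneric_eval_ne_zero _ (c₀ := c₀) ?_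
  rw [div_pow, div_pow, Ne, div_eq_div_iff (pow_ne_zero s hσ) (pow_ne_zero t hσ),
    mul_comm (τ ^ t)] at hst
  simpa [eval_eval_genericPoly, hi₀, hj₀, sub_eq_zero] using hst

lemma eventually_eval_mul_eval_sub_ne_zero_of_ne (hij : i ≠ j) (hi : (SS i).Nonempty)
    (hj : (SS j).Nonempty) (h0 : 0 ∈ SS i ∪ SS j) {R : Finset ℂ} (hR0 : ∀ τ ∈ R, τ ≠ 0)
    (hR : ∀ τ ∈ R, ∀ σ ∈ R, (∀ s ∈ SS i ∪ SS j, τ ^ s = σ ^ s) → τ = σ) :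
    ∀ᶠ c in zariskiGeneric (Σ i, {s // s ∈ SS i}) ℂ, ∀ τ ∈ R, ∀ σ ∈ R, τ ≠ σ →
      (sparsePoly c i).eval τ * (sparsePoly c j).eval σ -
        (sparsePoly c i).eval σ * (sparsePoly c j).eval τ ≠ 0 :=
  (eventually_all_finset _).2 fun τ hτ => (eventually_all_finset _).2 fun σ hσ =>
    eventually_imp_distrib_left.2 fun hτσ => by
      refine eventually_eval_mul_eval_sub_ne_zero hij hi hj h0 (hR0 σ hσ) ?_
      by_contra! h
      exact hτσ (hR τ hτ σ hσ h)

end Evaluation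

variable {SS : Fin 4 → Finset ℕ} {n m : ℕ}

lemma exists_separable_elimResultant (hne : ∀ i, (SS i).Nonempty)
    (h₀ : 0 ∈ SS 0 ∪ SS 1) (h₁ : 0 ∈ SS 2 ∪ SS 3)
    (hgcd : ((SS 0 ∪ SS 1 ∪ (SS 2 ∪ SS 3)).filter (· ≠ 0)).gcd id = 1)
    (hn : n ∈ SS 0 ∪ SS 1) (hnmax : ∀ s ∈ SS 0 ∪ SS 1, s ≤ n) (hn0 : n ≠ 0)
    (hm : m ∈ SS 2 ∪ SS 3) (hmmax : ∀ s ∈ SS 2 ∪ SS 3, s ≤ m) (hm0 : m ≠ 0) :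
    ∃ c : (Σ i, {s // s ∈ SS i}) → ℂ, (sparsePoly c 2 - sparsePoly c 3).natDegree = m ∧
      (elimResultant n m (sparsePoly c 0) (sparsePoly c 1)
        (sparsePoly c 2 - sparsePoly c 3)).natDegree = m ∧
      (elimResultant n m (sparsePoly c 0) (sparsePoly c 1)
        (sparsePoly c 2 - sparsePoly c 3)).Separable := by
  obtain ⟨f, hsupp, hdeg, hnodup, hf0, hsep⟩ :=
    exists_separating_fiber (K := ℂ) hn hn0 h₁ hm hmmax hm0 hgcd
  obtain ⟨P₁, Q₁, hP₁, hQ₁, hsub⟩ := exists_sub_eq_of_support_subset_union hsupp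
  have hQ₀ : ∀ᶠ c in zariskiGeneric (Σ i, {s // s ∈ SS i}) ℂ,
      ∀ τ ∈ f.roots.toFinset, (sparsePoly c 1).eval τ ≠ 0 :=
    (eventually_all_finset _).2 fun τ hτ =>
      eventually_eval_sparsePoly_ne_zero (hne 1) (hf0 τ (Multiset.mem_toFinset.1 hτ))
  have hcross := eventually_eval_mul_eval_sub_ne_zero_of_ne (SS := SS) (i := 0) (j := 1)
    (R := f.roots.toFinset) (by decide) (hne 0) (hne 1) h₀
    (by simpa only [Multiset.mem_toFinset] using hf0)
    (by simpa only [Multiset.mem_toFinset] using hsep)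
  obtain ⟨c, hQ₀, hcross⟩ := (hQ₀.and hcross).exists
  let F : Fin 4 → ℂ[X] := ![sparsePoly c 0, sparsePoly c 1, P₁, Q₁]
  have hF (i : Fin 4) (hi : (F i).support ⊆ SS i) := sparsePoly_coeff (f := F) hi
  refine ⟨fun p => (F p.1).coeff p.2, ?_⟩
  rw [hF 0 (support_polyOfCoeffs_subset _ _), hF 1 (support_polyOfCoeffs_subset _ _), hF 2 hP₁,
    hF 3 hQ₁]
  simp only [Multiset.mem_toFinset] at hQ₀ hcross
  have hP₀deg := natDegree_sparsePoly_le c fun s hs => hnmax s (Finset.mem_union_left _ hs)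
  have hQ₀deg := natDegree_sparsePoly_le c fun s hs => hnmax s (Finset.mem_union_right _ hs)
  have hfne : f ≠ 0 := ne_zero_of_natDegree_gt (hdeg ▸ Nat.pos_of_ne_zero hm0)
  have hs := IsAlgClosed.splits f
  simp only [F, Matrix.cons_val, hsub]
  exact ⟨hdeg, natDegree_elimResultant_eq hP₀deg hQ₀deg hdeg hfne hs hQ₀,
    separable_elimResultant hP₀deg hQ₀deg hdeg hfne hs hnodup hQ₀ hcross⟩

lemma eventually_separable_elimResultant_map {σ K : Type*} [Field K]
    {P Q f : (MvPolynomial σ K)[X]} (hP : P.natDegree ≤ n) (hQ : Q.natDegree ≤ n)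
    (hf : f.natDegree ≤ m) {c₀ : σ → K}
    (hdeg : (elimResultant n m (P.map (MvPolynomial.eval c₀)) (Q.map (MvPolynomial.eval c₀))
      (f.map (MvPolynomial.eval c₀))).natDegree = m)
    (hsep : (elimResultant n m (P.map (MvPolynomial.eval c₀)) (Q.map (MvPolynomial.eval c₀))
      (f.map (MvPolynomial.eval c₀))).Separable) :
    ∀ᶠ c in zariskiGeneric σ K,
      (elimResultant n m (P.map (MvPolynomial.eval c)) (Q.map (MvPolynomial.eval c))
        (f.map (MvPolynomial.eval c))).natDegree = m ∧
      (elimResultant n m (P.map (MvPolynomial.eval c)) (Q.map (MvPolynomial.eval c))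
        (f.map (MvPolynomial.eval c))).Separable := by
  simp only [← elimResultant_map] at hdeg hsep ⊢
  have hm : (elimResultant n m P Q f).natDegree = m :=
    (natDegree_elimResultant_le hP hQ hf).antisymm (hdeg.symm.trans_le natDegree_map_le)
  have hlead := map_leadingCoeff_ne_zero (hdeg.trans hm.symm) hsep.ne_zero
  simpa only [hm] using eventually_zariskiGeneric_separable_map _ hlead hsep

lemma eventually_separable_elimResultant (hne : ∀ i, (SS i).Nonempty)
    (h₀ : 0 ∈ SS 0 ∪ SS 1) (h₁ : 0 ∈ SS 2 ∪ SS 3)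
    (hgcd : ((SS 0 ∪ SS 1 ∪ (SS 2 ∪ SS 3)).filter (· ≠ 0)).gcd id = 1)
    (hn : n ∈ SS 0 ∪ SS 1) (hnmax : ∀ s ∈ SS 0 ∪ SS 1, s ≤ n) (hn0 : n ≠ 0)
    (hm : m ∈ SS 2 ∪ SS 3) (hmmax : ∀ s ∈ SS 2 ∪ SS 3, s ≤ m) (hm0 : m ≠ 0) :
    ∀ᶠ c in zariskiGeneric (Σ i, {s // s ∈ SS i}) ℂ,
      (sparsePoly c 2 - sparsePoly c 3).natDegree = m ∧
      (elimResultant n m (sparsePoly c 0) (sparsePoly c 1)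
        (sparsePoly c 2 - sparsePoly c 3)).natDegree = m ∧
      (elimResultant n m (sparsePoly c 0) (sparsePoly c 1)
        (sparsePoly c 2 - sparsePoly c 3)).Separable := by
  obtain ⟨c₀, hdeg, hres, hsep⟩ :=
    exists_separable_elimResultant hne h₀ h₁ hgcd hn hnmax hn0 hm hmmax hm0
  simp only [← map_eval_genericPoly, ← Polynomial.map_sub] at hdeg hres hsep ⊢
  have hgen {i : Fin 4} {k : ℕ} (hk : ∀ s ∈ SS i, s ≤ k) : (genericPoly SS i).natDegree ≤ k :=
    natDegree_le_of_support_subset (support_genericPoly SS i).subset hk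
  simp only [Finset.forall_mem_union] at hnmax hmmax
  have hF : (genericPoly SS 2 - genericPoly SS 3).natDegree ≤ m :=
    (natDegree_sub_le _ _).trans (max_le (hgen hmmax.1) (hgen hmmax.2))
  have hFm : (genericPoly SS 2 - genericPoly SS 3).natDegree = m :=
    hF.antisymm (hdeg.symm.trans_le natDegree_map_le)
  have hlead := map_leadingCoeff_ne_zero (hdeg.trans hFm.symm)
    (ne_zero_of_natDegree_gt ((Nat.pos_of_ne_zero hm0).trans_eq hdeg.symm))
  filter_upwards [eventually_zariskiGeneric_natDegree_map _ hlead,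
    eventually_separable_elimResultant_map (hgen hnmax.1) (hgen hnmax.2) hF hres hsep]
    with c hc hcsep
  exact ⟨hc.trans hFm, hcsep⟩

end GenericFiber

section DenominatorRoots

lemma countP_replicate {α : Type*} (p : α → Prop) [DecidablePred p] (k : ℕ) (a : α) :
    (Multiset.replicate k a).countP p = if p a then k else 0 := by
  rw [← Multiset.coe_replicate, Multiset.coe_countP, List.countP_replicate]
  simp

lemma countP_eq_of_forall_ne {α : Type*} [DecidableEq α] {p : α → Prop} [DecidablePred p]
    {s : Multiset α} {a : α} (h : ∀ b ∈ s, b ≠ a → p b) :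
    s.countP p = (s.card - s.count a) + if p a then s.count a else 0 := by
  have hrest : (s.filter (· ≠ a)).countP p = s.card - s.count a := by
    have hcard := congrArg Multiset.card (Multiset.filter_add_not (· = a) s)
    rw [Multiset.card_add, Multiset.filter_eq', Multiset.card_replicate] at hcard
    rw [Multiset.countP_eq_card.2 fun b hb =>
      h b (Multiset.mem_filter.1 hb).1 (Multiset.mem_filter.1 hb).2]
    exact (Nat.sub_eq_of_eq_add' hcard.symm).symm
  rw [Multiset.countP_eq_countP_filter_add s p (· = a), hrest, Multiset.filter_eq',
    countP_replicate, add_comm]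

lemma countP_rootValues_snd_ne_zero {K : Type*} [Field K] [DecidableEq K] {n m : ℕ} {P Q f : K[X]}
    (hf : f.Splits) (hQ : ∀ τ ≠ 0, f.eval τ = 0 → Q.eval τ ≠ 0) :
    (rootValues n m P Q f).countP (·.2 ≠ 0) =
      (f.natDegree - f.rootMultiplicity 0) + (if Q.eval 0 ≠ 0 then f.rootMultiplicity 0 else 0) +
        if Q.coeff n ≠ 0 then m - f.natDegree else 0 := by
  rw [rootValues, Multiset.countP_add, countP_replicate, Multiset.countP_map, add_comm,
    ← Multiset.countP_eq_card_filter, countP_eq_of_forall_ne (a := 0) fun τ hτ hτ0 =>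
      hQ τ hτ0 (isRoot_of_mem_roots hτ), count_roots, ← hf.natDegree_eq_card_roots]

variable {ι : Type*} {SS : ι → Finset ℕ} {c : (Σ i, {s // s ∈ SS i}) → ℂ}

lemma natDegree_sparsePoly (hc : ∀ p, c p ≠ 0) {i : ι} (hi : (SS i).Nonempty) :
    (sparsePoly c i).natDegree = (SS i).max' hi := by
  have hne : sparsePoly c i ≠ 0 := by rwa [← support_nonempty, support_sparsePoly hc]
  simp only [natDegree_eq_support_max' hne, support_sparsePoly hc]

lemma rootMultiplicity_zero_sparsePoly (hc : ∀ p, c p ≠ 0) {i : ι} (hi : (SS i).Nonempty) :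
    (sparsePoly c i).rootMultiplicity 0 = (SS i).min' hi := by
  have hne : sparsePoly c i ≠ 0 := by rwa [← support_nonempty, support_sparsePoly hc]
  simp only [rootMultiplicity_eq_natTrailingDegree', natTrailingDegree_eq_support_min' hne,
    support_sparsePoly hc]

lemma coeff_sparsePoly_ne_zero_iff (hc : ∀ p, c p ≠ 0) {i : ι} {k : ℕ} :
    (sparsePoly c i).coeff k ≠ 0 ↔ k ∈ SS i := by
  rw [← mem_support_iff, support_sparsePoly hc]

lemma countP_rootValues_sparsePoly {i j : ι} {n m : ℕ} (hc : ∀ p, c p ≠ 0) (hi : (SS i).Nonempty)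
    (hroot : ∀ τ ≠ 0, (sparsePoly c i).eval τ = 0 → (sparsePoly c j).eval τ ≠ 0) (P : ℂ[X]) :
    (rootValues m n P (sparsePoly c j) (sparsePoly c i)).countP (·.2 ≠ 0) =
      ((SS i).max' hi - (SS i).min' hi) + (if 0 ∈ SS j then (SS i).min' hi else 0) +
        if m ∈ SS j then n - (SS i).max' hi else 0 := by
  simp only [countP_rootValues_snd_ne_zero (IsAlgClosed.splits _) hroot,
    ← coeff_zero_eq_eval_zero, coeff_sparsePoly_ne_zero_iff hc, natDegree_sparsePoly hc hi,
    rootMultiplicity_zero_sparsePoly hc hi]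

end DenominatorRoots

lemma isGreatest_natDegree_coeff_iteratedEquiv {R : Type*} [CommRing R]
    {φ : MvPolynomial (Fin 2) R} {m : ℕ}
    (h : (iteratedEquiv R φ).coeff m ≠ 0) :
    IsGreatest {j | (Finsupp.single 0 m + Finsupp.single 1 j : Fin 2 →₀ ℕ) ∈ φ.support}
      ((iteratedEquiv R φ).coeff m).natDegree := by
  simp only [MvPolynomial.mem_support_iff, ← coeff_coeff_iteratedEquiv]
  exact ⟨leadingCoeff_ne_zero.2 h, fun j hj => le_natDegree_of_ne_zero hj⟩

/-- Different denominators: for generic coefficients, the degree of the implicit equation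
in `x` is `a₁m`, and the largest `j` with `(a₁m, j)` in the support of `φ` is the stated
quantity.  Here `SS 0, SS 1, SS 2, SS 3` are the supports of `P₀, Q₀, P₁, Q₁`. -/
theorem implicit_xmax_ymax (SS : Fin 4 → Finset ℕ) (hne : ∀ i, (SS i).Nonempty)
    (h00 : 0 ∈ SS 0 ∪ SS 1) (h01 : 0 ∈ SS 2 ∪ SS 3)
    (hgcd : ((SS 0 ∪ SS 1 ∪ SS 2 ∪ SS 3).filter (fun s => s ≠ 0)).gcd id = 1)
    (a0n a1m : ℕ)
    (ha0nmem : a0n ∈ SS 0 ∪ SS 1) (ha0nmax : ∀ s ∈ SS 0 ∪ SS 1, s ≤ a0n)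
    (ha1mmem : a1m ∈ SS 2 ∪ SS 3) (ha1mmax : ∀ s ∈ SS 2 ∪ SS 3, s ≤ a1m)
    (ha0n1 : 1 ≤ a0n) (ha1m1 : 1 ≤ a1m) :
    ∃ G : MvPolynomial (Σ i : Fin 4, {s // s ∈ SS i}) ℂ, G ≠ 0 ∧
      ∀ c : (Σ i : Fin 4, {s // s ∈ SS i}) → ℂ, MvPolynomial.eval c G ≠ 0 →
        ∀ φ : MvPolynomial (Fin 2) ℂ, Irreducible φ → vanishesDiff SS c φ →
          MvPolynomial.degreeOf 0 φ = a1m ∧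
          IsGreatest {j : ℕ |
              (Finsupp.single 0 a1m + Finsupp.single 1 j : Fin 2 →₀ ℕ) ∈ φ.support}
            (((SS 1).max' (hne 1) - (SS 1).min' (hne 1)) +
              (if 0 ∈ SS 3 then (SS 1).min' (hne 1) else 0) +
              (if a1m ∈ SS 3 then a0n - (SS 1).max' (hne 1) else 0)) := by
  classical
  rw [Finset.union_assoc] at hgcd
  have hn0 : a0n ≠ 0 := by omega
  have hm0 : a1m ≠ 0 := by omega
  change ∀ᶠ c in zariskiGeneric _ ℂ, ∀ φ, Irreducible φ → vanishesDiff SS c φ → _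
  filter_upwards [eventually_zariskiGeneric_forall_ne_zero,
    eventually_isRationalMap_sparsePoly (by decide) (hne 0) (hne 1) h00 ha0nmem ha0nmax,
    eventually_isRationalMap_sparsePoly (by decide) (hne 2) (hne 3) h01 ha1mmem ha1mmax,
    eventually_no_common_nonzero_root_sparsePoly (by decide) (hne 1) (hne 3),
    eventually_separable_elimResultant hne h00 h01 hgcd ha0nmem ha0nmax hn0 ha1mmem ha1mmax hm0]
    with c hc h₀ h₁ hroot ⟨hdeg, hres, hsep⟩ φ hirr hφ
  have hirr' : Irreducible (iteratedEquiv ℂ φ) :=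
    (MulEquiv.irreducible_iff (iteratedEquiv ℂ)).2 hirr
  obtain ⟨hdegree, hcoeff⟩ := natDegree_eq_and_natDegree_coeff_eq h₀ h₁
    ((aevalAeval_iteratedEquiv _ _ φ).trans hφ) hn0 hm0 hirr' (y := 1)
    (by simpa using hdeg) (by simpa using hres) (by simpa using hsep)
  refine ⟨(natDegree_iteratedEquiv φ).symm.trans hdegree, ?_⟩
  rw [← countP_rootValues_sparsePoly hc (hne 1) hroot (sparsePoly c 2), ← hcoeff]
  refine isGreatest_natDegree_coeff_iteratedEquiv ?_
  rw [← hdegree]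
  exact leadingCoeff_ne_zero.2 hirr'.ne_zero
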